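/- Let K be an algebraically closed field and let V ⊆ Kⁿ be a Zariski-closed set (the common zero locus of a family of polynomials in K[X₁, …, Xₙ]). If V is infinite, then there exists an index i ∈ {1, …, n} such that the image of V under the projection to the i-th coordinate has finite complement in K. -/

import Mathlib

/-- The closed point of the affine line attached to `a`. -/
noncomputable def linePt {K : Type*} [Field K] (a : K) : PrimeSpectrum (Polynomial K) :=
  PrimeSpectrum.comap (Polynomial.evalRingHom a) ⊥

lemma mem_linePt {K : Type*} [Field K] (a : K) (p : Polynomial K) :
    p ∈ (linePt a).asIdeal ↔ p.eval a = 0 := by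
  change Polynomial.evalRingHom a p ∈ (⊥ : Ideal K) ↔ _
  simp

/-- A constructible subset of the affine line has finitely or cofinitely many closed points. -/
lemma constructible_line {K : Type*} [Field K] {s : Set (PrimeSpectrum (Polynomial K))}
    (hs : Topology.IsConstructible s) :
    (linePt ⁻¹' s).Finite ∨ (linePt ⁻¹' s)ᶜ.Finite := by
  induction hs using Topology.IsConstructible.empty_union_induction with
  | open_retrocompact U hU _ =>
    obtain ⟨T, hT⟩ := (PrimeSpectrum.isOpen_iff U).1 hU
    by_cases h : ∃ p ∈ T, p ≠ 0
    · obtain ⟨p, hp, hp0⟩ := h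
      right
      refine (Polynomial.finite_setOf_isRoot hp0).subset fun a ha => ?_
      have h1 : linePt a ∈ Uᶜ := ha
      rw [hT] at h1
      exact (mem_linePt a p).1 (h1 hp)
    · push Not at h
      left
      have : linePt ⁻¹' U = (∅ : Set K) := by
        ext a
        have h1 : linePt a ∈ Uᶜ := by
          rw [hT]
          intro p hp
          rw [h p hp]
          exact zero_mem _
        simpa using h1
      rw [this]
      exact Set.finite_empty
  | union s hs t ht hs' ht' =>
    rw [Set.preimage_union, Set.compl_union]
    rcases hs' with h | h
    · rcases ht' with h' | h'
      · exact Or.inl (h.union h')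
      · exact Or.inr (h'.subset Set.inter_subset_right)
    · exact Or.inr (h.subset Set.inter_subset_left)
  | compl s hs hs' =>
    rw [Set.preimage_compl, compl_compl]
    exact hs'.symm

lemma proj_finite_or_cofinite
    {K : Type*} [Field K] [IsAlgClosed K]
    (n : ℕ) (S : Set (MvPolynomial (Fin n) K)) (i : Fin n) :
    ((fun x : Fin n → K => x i) '' {x | ∀ f ∈ S, MvPolynomial.eval x f = 0}).Finite ∨
    ((fun x : Fin n → K => x i) '' {x | ∀ f ∈ S, MvPolynomial.eval x f = 0})ᶜ.Finite := by
  let φ : Polynomial K →+* MvPolynomial (Fin n) K :=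
    (Polynomial.aeval (MvPolynomial.X i : MvPolynomial (Fin n) K)).toRingHom
  have hφ : φ.FinitePresentation := by
    rw [← RingHom.FinitePresentation.of_finiteType]
    apply RingHom.FiniteType.of_comp_finiteType (f := Polynomial.C)
    have : φ.comp Polynomial.C = algebraMap K (MvPolynomial (Fin n) K) := by
      ext a; simp [φ]
    rw [this, RingHom.finiteType_algebraMap]
    infer_instance
  have hZ : Topology.IsConstructible (PrimeSpectrum.zeroLocus S) := by
    rw [← Topology.isConstructible_compl]
    exact (TopologicalSpace.NoetherianSpace.isCompact _).isConstructible
      (PrimeSpectrum.isClosed_zeroLocus S).isOpen_compl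
  have key := constructible_line (PrimeSpectrum.isConstructible_comap_image hφ hZ)
  have heq : (fun x : Fin n → K => x i) '' {x | ∀ f ∈ S, MvPolynomial.eval x f = 0} =
      linePt ⁻¹' (PrimeSpectrum.comap φ '' PrimeSpectrum.zeroLocus S) := by
    ext a
    constructor
    · rintro ⟨x, hx, rfl⟩
      refine ⟨PrimeSpectrum.comap (MvPolynomial.eval x) ⊥, ?_, ?_⟩
      · intro f hf
        change MvPolynomial.eval x f ∈ (⊥ : Ideal K)
        simpa using hx f hf
      · rw [← PrimeSpectrum.comap_comp_apply, linePt]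
        congr 1
        ext <;> simp [φ]
    · rintro ⟨Q, hQ, hQa⟩
      obtain ⟨M, hM, hQM⟩ := Ideal.exists_le_maximal Q.asIdeal Q.isPrime.ne_top
      obtain ⟨x, rfl⟩ := MvPolynomial.isMaximal_iff_eq_vanishingIdeal_singleton.1 hM
      have hev : ∀ f ∈ Q.asIdeal, MvPolynomial.eval x f = 0 := fun f hf => by
        have := (MvPolynomial.mem_vanishingIdeal_singleton_iff x f).1 (hQM hf)
        simpa [MvPolynomial.aeval_eq_eval] using this
      refine ⟨x, fun f hf => hev f (hQ hf), ?_⟩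
      have h1 : (Polynomial.X - Polynomial.C a) ∈ (linePt a).asIdeal := by
        rw [mem_linePt]; simp
      rw [← hQa] at h1
      have h2 := hev _ (show φ (Polynomial.X - Polynomial.C a) ∈ Q.asIdeal from h1)
      simpa [φ, sub_eq_zero] using h2
  rw [heq]
  exact key


/-- An infinite Zariski-closed subset of `Kⁿ`, `K` algebraically closed, has some
coordinate projection whose image has finite complement in `K`. -/
theorem infinite_zariski_closed_proj_cofinite
    {K : Type*} [Field K] [IsAlgClosed K]
    (n : ℕ) (S : Set (MvPolynomial (Fin n) K)) (V : Set (Fin n → K))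
    (hV : V = {x : Fin n → K | ∀ f ∈ S, MvPolynomial.eval x f = 0})
    (hinf : V.Infinite) :
    ∃ i : Fin n, (((fun x : Fin n → K => x i) '' V)ᶜ).Finite := by
  subst hV
  by_contra hcon
  push Not at hcon
  apply hinf
  refine (Set.Finite.pi' fun i =>
    (proj_finite_or_cofinite n S i).resolve_right (hcon i)).subset ?_
  intro x hx i
  exact ⟨x, hx, rfl⟩
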